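/- The hypergeometric evaluation 2F1(a/2, (a+1)/2; a+1; z) = ((1 + sqrt(1-z))/2)^{-a} for z in the unit disc with principal branches. -/

import Mathlib

/-!
The function `f x = ((1 + √(1 - x)) / 2) ^ (-a)` is holomorphic on the unit disc, because
`√(1 - x)` has positive real part there. It satisfies the hypergeometric equation
`x (1 - x) D²f + ((a + 1) - (a + 3/2) x) Df - (a / 2) ((a + 1) / 2) f = 0` (`ode_base`).
Differentiating this `n` times (`ode_iter`) and evaluating at `0` gives
`(a + 1 + n) Dⁿ⁺¹f(0) = (a / 2 + n) ((a + 1) / 2 + n) Dⁿf(0)`. Since `f 0 = 1`, the Taylor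
coefficients of `f` at `0` are those of the hypergeometric series, and the Taylor series of `f`
converges to `f` on the whole unit disc.
-/

noncomputable def poch (a : ℂ) (n : ℕ) : ℂ := (ascPochhammer ℂ n).eval a

noncomputable def hpg21 (A B C z : ℂ) : ℂ :=
  ∑' n : ℕ, poch A n * poch B n / (poch C n * (n.factorial : ℂ)) * z ^ n

/-- The principal square root of `1 - x`. -/
noncomputable def rt (x : ℂ) : ℂ := (1 - x) ^ (1/2 : ℂ)

/-- The closed form `((1 + √(1 - x)) / 2) ^ (-a)` of the hypergeometric series. -/
noncomputable def cf (a x : ℂ) : ℂ := ((1 + rt x) / 2) ^ (-a)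

lemma one_sub_mem {x : ℂ} (hx : ‖x‖ < 1) : 1 - x ∈ Complex.slitPlane := by
  left
  have := (Complex.re_le_norm x).trans_lt hx
  simp only [Complex.sub_re, Complex.one_re]
  linarith

lemma rt_re_pos {x : ℂ} (hx : ‖x‖ < 1) : 0 < (rt x).re := by
  have h := one_sub_mem hx
  have h0 : 1 - x ≠ 0 := Complex.slitPlane_ne_zero h
  rw [rt, Complex.cpow_def_of_ne_zero h0, Complex.exp_re]
  refine mul_pos (Real.exp_pos _) (Real.cos_pos_of_mem_Ioo ?_)
  have him : (Complex.log (1 - x) * (1/2 : ℂ)).im = Complex.arg (1 - x) / 2 := by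
    rw [show (1/2 : ℂ) = ((1/2 : ℝ) : ℂ) by norm_num, Complex.im_mul_ofReal, Complex.log_im]
    ring
  rw [him]
  have h1 := Complex.neg_pi_lt_arg (1 - x)
  have h2 := (Complex.arg_le_pi (1 - x)).lt_of_ne (Complex.mem_slitPlane_iff_arg.1 h).1
  constructor <;> linarith

lemma rt_ne {x : ℂ} (hx : ‖x‖ < 1) : rt x ≠ 0 := fun h => by
  have := rt_re_pos hx
  simp [h] at this

lemma one_add_rt_ne {x : ℂ} (hx : ‖x‖ < 1) : 1 + rt x ≠ 0 := fun h => by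
  have := rt_re_pos hx
  have h2 := congrArg Complex.re h
  simp at h2
  linarith

lemma rt_sq {x : ℂ} : rt x ^ 2 = 1 - x := by
  rw [rt, ← Complex.cpow_nat_mul]
  norm_num

lemma hasDerivAt_rt {x : ℂ} (hx : ‖x‖ < 1) : HasDerivAt rt (-1 / (2 * rt x)) x := by
  have h := one_sub_mem hx
  have h0 : 1 - x ≠ 0 := Complex.slitPlane_ne_zero h
  have h1 := ((hasDerivAt_id x).const_sub 1).cpow_const (c := (1/2 : ℂ)) h
  refine h1.congr_deriv ?_
  have hs := rt_ne hx
  simp only [id]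
  rw [Complex.cpow_sub _ _ h0, Complex.cpow_one]
  change 1/2 * (rt x / (1 - x)) * -1 = _
  rw [← rt_sq]
  field_simp

lemma hasDerivAt_cf (a : ℂ) {x : ℂ} (hx : ‖x‖ < 1) :
    HasDerivAt (cf a) (a * cf a x / (2 * rt x * (1 + rt x))) x := by
  have hs := rt_ne hx
  have h1s := one_add_rt_ne hx
  have hm : (1 + rt x) / 2 ∈ Complex.slitPlane := by
    left
    have := rt_re_pos hx
    rw [show (1 + rt x) / 2 = ((1/2 : ℝ) : ℂ) * (1 + rt x) by push_cast; ring,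
      Complex.re_ofReal_mul]
    simp only [Complex.add_re, Complex.one_re]
    linarith
  have h := (((hasDerivAt_rt hx).const_add 1).div_const 2).cpow_const (c := -a) hm
  refine h.congr_deriv ?_
  rw [Complex.cpow_sub _ _ (Complex.slitPlane_ne_zero hm), Complex.cpow_one]
  change -a * (cf a x / _) * _ = _
  field_simp

lemma diffOn_cf (a : ℂ) : DifferentiableOn ℂ (cf a) (Metric.ball 0 1) := fun x hx =>
  (hasDerivAt_cf a (by simpa using hx)).differentiableAt.differentiableWithinAt

lemma hasDerivAt_iter (a : ℂ) (n : ℕ) {x : ℂ} (hx : ‖x‖ < 1) :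
    HasDerivAt (iteratedDeriv n (cf a)) (iteratedDeriv (n + 1) (cf a) x) x := by
  have hA : AnalyticAt ℂ (cf a) x :=
    (diffOn_cf a).analyticAt (Metric.isOpen_ball.mem_nhds (by simpa using hx))
  rw [iteratedDeriv_succ]
  refine DifferentiableAt.hasDerivAt ?_
  rw [iteratedDeriv_eq_iterate]
  exact (hA.iterated_deriv n).differentiableAt

/-- The hypergeometric differential equation with parameters `a / 2`, `(a + 1) / 2`, `a + 1`. -/
lemma ode_base (a : ℂ) {x : ℂ} (hx : ‖x‖ < 1) :
    x * (1 - x) * iteratedDeriv 2 (cf a) x + ((a + 1) - (a + 3/2) * x) * iteratedDeriv 1 (cf a) x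
      - (a / 2) * ((a + 1) / 2) * cf a x = 0 := by
  have hs := rt_ne hx
  have h1s := one_add_rt_ne hx
  have hd1 : ∀ y : ℂ, ‖y‖ < 1 →
      iteratedDeriv 1 (cf a) y = a * cf a y / (2 * rt y * (1 + rt y)) := fun y hy => by
    rw [iteratedDeriv_one, (hasDerivAt_cf a hy).deriv]
  have hev : iteratedDeriv 1 (cf a) =ᶠ[nhds x] fun y => a * cf a y / (2 * rt y * (1 + rt y)) := by
    filter_upwards [Metric.isOpen_ball.mem_nhds (show x ∈ Metric.ball (0 : ℂ) 1 by simpa using hx)]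
      with y hy
    exact hd1 y (by simpa using hy)
  have hq := hasDerivAt_rt hx
  have h2 := ((hasDerivAt_cf a hx).const_mul a).div ((hq.const_mul 2).mul (hq.const_add 1))
    (mul_ne_zero (mul_ne_zero two_ne_zero hs) h1s)
  have h3 := (hasDerivAt_iter a 1 hx).unique (h2.congr_of_eventuallyEq hev)
  rw [show iteratedDeriv 2 (cf a) x = _ from h3, hd1 x hx]
  -- Everything is rational in `√(1 - x)` once `x` is written as `1 - √(1 - x) ^ 2`.
  have hxe : x = 1 - rt x ^ 2 := by rw [rt_sq]; ring
  simp only [Pi.mul_apply]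
  generalize cf a x = F
  generalize rt x = s at *
  subst hxe
  field_simp
  ring

/-- The `n`-fold derivative of the hypergeometric equation is again hypergeometric, with all three
parameters shifted by `n`. -/
lemma ode_iter (a : ℂ) (n : ℕ) : ∀ x : ℂ, ‖x‖ < 1 →
    x * (1 - x) * iteratedDeriv (n + 2) (cf a) x
      + ((n + a + 1) - (2 * n + a + 3/2) * x) * iteratedDeriv (n + 1) (cf a) x
      - (a / 2 + n) * ((a + 1) / 2 + n) * iteratedDeriv n (cf a) x = 0 := by
  induction n with
  | zero =>
    intro x hx
    have := ode_base a hx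
    simpa using this
  | succ n ih =>
    intro x hx
    have h0 := hasDerivAt_iter a n hx
    have h1 := hasDerivAt_iter a (n + 1) hx
    have h2 := hasDerivAt_iter a (n + 2) hx
    have hid := hasDerivAt_id' x
    have hL := (((hid.mul (hid.const_sub 1)).mul h2).add
      (((hid.const_mul (2 * (n : ℂ) + a + 3/2)).const_sub ((n : ℂ) + a + 1)).mul h1)).sub
      (h0.const_mul ((a / 2 + n) * ((a + 1) / 2 + n)))
    have hR : HasDerivAt (fun _ : ℂ => (0 : ℂ)) 0 x := hasDerivAt_const x 0
    have hu := hL.unique (hR.congr_of_eventuallyEq (by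
      filter_upwards [Metric.isOpen_ball.mem_nhds
        (show x ∈ Metric.ball (0 : ℂ) 1 by simpa using hx)] with y hy
      exact ih y (by simpa using hy)))
    simp only [Pi.mul_apply] at hu
    push_cast
    rw [← hu]
    ring

lemma poch_succ (a : ℂ) (n : ℕ) : poch a (n + 1) = poch a n * (a + n) := by
  simp [poch, ascPochhammer_succ_eval]

lemma poch_ne (a : ℂ) (ha : ∀ n : ℕ, a ≠ -(n : ℂ)) (n : ℕ) : poch a n ≠ 0 := by
  induction n with
  | zero => simp [poch]
  | succ n ih =>
    rw [poch_succ]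
    exact mul_ne_zero ih fun h => ha n (eq_neg_of_add_eq_zero_left h)

lemma iter_zero (a : ℂ) (ha : ∀ n : ℕ, a + 1 ≠ -(n : ℂ)) (n : ℕ) :
    iteratedDeriv n (cf a) 0 = poch (a / 2) n * poch ((a + 1) / 2) n / poch (a + 1) n := by
  induction n with
  | zero => simp [poch, cf, rt]
  | succ n ih =>
    have h := ode_iter a n 0 (by simp)
    have hc := poch_ne _ ha n
    have hn : a + 1 + n ≠ 0 := fun h => ha n (eq_neg_of_add_eq_zero_left h)
    rw [ih] at h
    simp only [poch_succ]
    rw [eq_div_iff (mul_ne_zero hc hn)]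
    field_simp at h ⊢
    linear_combination h

theorem hpg_sqrt_eval (a z : ℂ) (ha : ∀ n : ℕ, a + 1 ≠ -(n : ℂ)) (hz : ‖z‖ < 1) :
    hpg21 (a / 2) ((a + 1) / 2) (a + 1) z =
      ((1 + (1 - z) ^ (1/2 : ℂ)) / 2) ^ (-a) := by
  have h := Complex.hasSum_taylorSeries_on_ball (r := 1) (diffOn_cf a)
    (show z ∈ Metric.ball (0 : ℂ) 1 by simpa using hz)
  change _ = cf a z
  rw [← h.tsum_eq, hpg21]
  refine tsum_congr fun n => ?_
  rw [iter_zero a ha]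
  simp only [smul_eq_mul, sub_zero]
  have := poch_ne _ ha n
  have := Nat.cast_ne_zero (R := ℂ).2 n.factorial_ne_zero
  field_simp
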